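/- Let q : [t₁−τ,t₂] → ℝⁿ be an admissible C² function which is a normal extremizer of the isoperimetric problem with time delay: q is a local minimizer or local maximizer of J^τ among admissible C² functions satisfying the isoperimetric constraint I^τ[q̂] := ∫_{t₁}^{t₂} g[q̂]_τ(t) dt = l, q satisfies I^τ[q] = l, and q does NOT satisfy on all of [t₁,t₂] the Euler–Lagrange equations with time delay associated with g (namely d/dt(∂₃g[q]_τ(t) + ∂₅g[q]_τ(t+τ)) = ∂₂g[q]_τ(t) + ∂₄g[q]_τ(t+τ) on [t₁,t₂−τ] and d/dt ∂₃g[q]_τ(t) = ∂₂g[q]_τ(t) on [t₂−τ,t₂]). Then there exists λ ∈ ℝ such that, with the augmented Lagrangian F := L − λ·g, q satisfies the isoperimetric Euler–Lagrange equations with time delay: d/dt(∂₃F[q,λ]_τ(t) + ∂₅F[q,λ]_τ(t+τ)) = ∂₂F[q,λ]_τ(t) + ∂₄F[q,λ]_τ(t+τ) for all t ∈ [t₁, t₂−τ], and d/dt ∂₃F[q,λ]_τ(t) = ∂₂F[q,λ]_τ(t) for all t ∈ [t₂−τ, t₂]. -/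

import Mathlib

/-!
Normality produces a direction `k` along which the first variation of the constraint functional
does not vanish. For any other direction `h`, restrict both functionals to the two-parameter family
`q + x₁ h + x₂ k`: by differentiation under the integral sign these restrictions are strictly
differentiable functions on `ℝ²`, with first variations as partial derivatives, and `0` is a
constrained local extremum. The Lagrange multiplier rule in `ℝ²` forces
`δJ(h) = λ δI(h)` with `λ = δJ(k) / δI(k)`, which does not depend on `h`. Hence the first variation
of the augmented functional vanishes in every admissible direction.

The passage between first variations and the Euler–Lagrange equations, used once for `g` (to find
`k`) and once for `L - λ g`, is `elDelay_of_firstVar_eq_zero`: the delayed terms are shifted in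
time, one integrates by parts, and the fundamental lemma of the calculus of variations is applied
on `(t₁, t₂ - τ)` and on `(t₂ - τ, t₂)`. Since `q` is `C²` and the Lagrangians are `C²` everywhere,
both sides of the equations are continuous on `ℝ` and the equations extend to the endpoints.
-/

open Set MeasureTheory RealInnerProductSpace

noncomputable section

/-- `ℝⁿ` as a Euclidean space. -/
abbrev Vec (n : ℕ) := EuclideanSpace ℝ (Fin n)

/-- The type of Lagrangians `L(t, q, q̇, q_τ, q̇_τ)`. -/
abbrev Lag (n : ℕ) := ℝ → Vec n → Vec n → Vec n → Vec n → ℝ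

/-- `∂₁L[q]_τ(t)`: partial derivative of `L` w.r.t. its first (time) argument,
evaluated along `[q]_τ(t) = (t, q(t), q̇(t), q(t-τ), q̇(t-τ))`. -/
def dL1 {n : ℕ} (L : Lag n) (τ : ℝ) (q : ℝ → Vec n) (t : ℝ) : ℝ :=
  deriv (fun s => L s (q t) (deriv q t) (q (t - τ)) (deriv q (t - τ))) t

/-- `∂₂L[q]_τ(t)` (a gradient, i.e. a vector in `ℝⁿ`). -/
def dL2 {n : ℕ} (L : Lag n) (τ : ℝ) (q : ℝ → Vec n) (t : ℝ) : Vec n :=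
  gradient (fun y => L t y (deriv q t) (q (t - τ)) (deriv q (t - τ))) (q t)

/-- `∂₃L[q]_τ(t)`. -/
def dL3 {n : ℕ} (L : Lag n) (τ : ℝ) (q : ℝ → Vec n) (t : ℝ) : Vec n :=
  gradient (fun v => L t (q t) v (q (t - τ)) (deriv q (t - τ))) (deriv q t)

/-- `∂₄L[q]_τ(t)`. -/
def dL4 {n : ℕ} (L : Lag n) (τ : ℝ) (q : ℝ → Vec n) (t : ℝ) : Vec n :=
  gradient (fun y => L t (q t) (deriv q t) y (deriv q (t - τ))) (q (t - τ))

/-- `∂₅L[q]_τ(t)`. -/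
def dL5 {n : ℕ} (L : Lag n) (τ : ℝ) (q : ℝ → Vec n) (t : ℝ) : Vec n :=
  gradient (fun v => L t (q t) (deriv q t) (q (t - τ)) v) (deriv q (t - τ))

/-- `L[q]_τ(t)`: the Lagrangian evaluated along the delayed trajectory. -/
def lagAlong {n : ℕ} (L : Lag n) (τ : ℝ) (q : ℝ → Vec n) (t : ℝ) : ℝ :=
  L t (q t) (deriv q t) (q (t - τ)) (deriv q (t - τ))

/-- The delayed functional `J^τ[q] = ∫_{t₁}^{t₂} L[q]_τ(t) dt`. -/
def Jτ {n : ℕ} (L : Lag n) (t₁ t₂ τ : ℝ) (q : ℝ → Vec n) : ℝ :=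
  ∫ t in t₁..t₂, lagAlong L τ q t

/-- `L` is `C²` in all of its arguments (jointly). -/
def LagC2 {n : ℕ} (L : Lag n) : Prop :=
  ContDiff ℝ 2 (fun p : ℝ × Vec n × Vec n × Vec n × Vec n =>
    L p.1 p.2.1 p.2.2.1 p.2.2.2.1 p.2.2.2.2)

/-- The Euler–Lagrange equations with time delay for the Lagrangian `L`. -/
def ELdelay {n : ℕ} (L : Lag n) (t₁ t₂ τ : ℝ) (q : ℝ → Vec n) : Prop :=
  (∀ t ∈ Icc t₁ (t₂ - τ),
      deriv (fun s => dL3 L τ q s + dL5 L τ q (s + τ)) t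
        = dL2 L τ q t + dL4 L τ q (t + τ)) ∧
  (∀ t ∈ Icc (t₂ - τ) t₂,
      deriv (fun s => dL3 L τ q s) t = dL2 L τ q t)

/-- Admissibility: `q` is `C²`, coincides with `δ` on `[t₁-τ, t₁]` and satisfies
`q(t₂) = q_{t₂}`. -/
def Admissible {n : ℕ} (t₁ t₂ τ : ℝ) (δ : ℝ → Vec n) (qt2 : Vec n)
    (q : ℝ → Vec n) : Prop :=
  ContDiff ℝ 2 q ∧ (∀ t ∈ Icc (t₁ - τ) t₁, q t = δ t) ∧ q t₂ = qt2

/-- The augmented Lagrangian `F = L - λ·g`. -/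
def Aug {n : ℕ} (L g : Lag n) (lam : ℝ) : Lag n :=
  fun t a b c d => L t a b c d - lam * g t a b c d

/-! ### Calculus on an interval -/

/-- Differentiation under the integral sign for a `C¹` integrand: the parametric integral has
a continuous derivative, hence is strictly differentiable. -/
lemma hasStrictFDerivAt_parametric_integral {H : Type*} [NormedAddCommGroup H] [NormedSpace ℝ H]
    [ProperSpace H] (F : H × ℝ → ℝ) (hF : ContDiff ℝ 1 F) (a b : ℝ) (x₀ : H) :
    HasStrictFDerivAt (fun x => ∫ t in a..b, F (x, t))
      (∫ t in a..b, (fderiv ℝ F (x₀, t)).comp (ContinuousLinearMap.inl ℝ H ℝ)) x₀ := by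
  have hcont : Continuous fun p : H × ℝ =>
      (fderiv ℝ F p).comp (ContinuousLinearMap.inl ℝ H ℝ) :=
    (hF.continuous_fderiv one_ne_zero).clm_comp continuous_const
  have hpart : ∀ x t, HasFDerivAt (fun x => F (x, t))
      ((fderiv ℝ F (x, t)).comp (ContinuousLinearMap.inl ℝ H ℝ)) x := fun x t =>
    ((hF.differentiable one_ne_zero) (x, t)).hasFDerivAt.comp x (hasFDerivAt_prodMk_left x t)
  have hslice : ∀ x : H, Continuous fun t : ℝ => (x, t) := fun x => by fun_prop
  refine hasStrictFDerivAt_of_hasFDerivAt_of_continuousAt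
    (f' := fun x => ∫ t in a..b, (fderiv ℝ F (x, t)).comp (ContinuousLinearMap.inl ℝ H ℝ)) ?_ ?_
  · refine Filter.Eventually.of_forall fun x => ?_
    obtain ⟨C, hC⟩ := ((isCompact_closedBall x 1).prod
      (isCompact_uIcc (a := a) (b := b))).exists_bound_of_continuousOn hcont.continuousOn
    refine intervalIntegral.hasFDerivAt_integral_of_dominated_of_fderiv_le
      (F := fun x t => F (x, t))
      (F' := fun x t => (fderiv ℝ F (x, t)).comp (ContinuousLinearMap.inl ℝ H ℝ))
      (bound := fun _ => C) (Metric.closedBall_mem_nhds x one_pos) ?_ ?_ ?_ ?_ ?_ ?_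
    · exact Filter.Eventually.of_forall fun y =>
        (hF.continuous.comp (hslice y)).aestronglyMeasurable
    · exact (hF.continuous.comp (hslice x)).intervalIntegrable _ _
    · exact (hcont.comp (hslice x)).aestronglyMeasurable
    · exact Filter.Eventually.of_forall fun t ht y hy => hC (y, t) ⟨hy, uIoc_subset_uIcc ht⟩
    · exact intervalIntegrable_const
    · exact Filter.Eventually.of_forall fun t _ y _ => hpart y t
  · exact (intervalIntegral.continuous_parametric_intervalIntegral_of_continuous'
      (f := fun x t => (fderiv ℝ F (x, t)).comp (ContinuousLinearMap.inl ℝ H ℝ))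
      hcont a b).continuousAt

/-- The fundamental lemma of the calculus of variations, up to the endpoints. -/
lemma eq_zero_of_forall_bump {n : ℕ} {a b : ℝ} (hab : a < b) {E : ℝ → Vec n} (hE : Continuous E)
    (h : ∀ φ : ℝ → ℝ, ContDiff ℝ 2 φ → tsupport φ ⊆ Ioo a b → ∀ v : Vec n,
      ∫ t in a..b, φ t * ⟪E t, v⟫ = 0) :
    ∀ t ∈ Icc a b, E t = 0 := by
  have key : ∀ v : Vec n, ∀ t ∈ Icc a b, ⟪E t, v⟫ = 0 := by
    intro v
    have hc : Continuous fun t => ⟪E t, v⟫ := by fun_prop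
    have hae := isOpen_Ioo.ae_eq_zero_of_integral_contDiff_smul_eq_zero (U := Ioo a b)
      (μ := volume) (f := fun t => ⟪E t, v⟫) (hc.locallyIntegrable.locallyIntegrableOn _) (by
        intro φ hφ _ hs
        rw [← h φ (contDiff_infty.1 hφ 2) hs v,
          intervalIntegral.integral_eq_integral_of_support_subset]
        · rfl
        · refine fun t ht => Ioo_subset_Ioc_self (hs (subset_tsupport _ ?_))
          exact left_ne_zero_of_mul ht)
    have hopen : EqOn (fun t => ⟪E t, v⟫) (fun _ => 0) (Ioo a b) :=
      Measure.eqOn_open_of_ae_eq (μ := volume)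
        ((ae_restrict_iff' measurableSet_Ioo).2 hae) isOpen_Ioo hc.continuousOn
        continuousOn_const
    have := hopen.closure hc continuous_const
    rwa [closure_Ioo hab.ne] at this
  exact fun t ht => inner_self_eq_zero.1 (key (E t) t ht)

lemma eq_zero_and_deriv_eq_zero_of_notMem {φ : ℝ → ℝ} {s : Set ℝ} (hs : tsupport φ ⊆ s) {t : ℝ}
    (ht : t ∉ s) : φ t = 0 ∧ deriv φ t = 0 := by
  refine ⟨image_eq_zero_of_notMem_tsupport fun h => ht (hs h), ?_⟩
  by_contra h
  exact ht (hs (support_deriv_subset h))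

/-- Integration by parts followed by the fundamental lemma, for a `C¹` momentum `B` and a
continuous force `A`. -/
lemma deriv_eq_of_forall_bump {n : ℕ} {a b : ℝ} (hab : a < b) {A B : ℝ → Vec n}
    (hA : Continuous A) (hB : ContDiff ℝ 1 B)
    (h : ∀ φ : ℝ → ℝ, ContDiff ℝ 2 φ → tsupport φ ⊆ Ioo a b → ∀ v : Vec n,
      ∫ t in a..b, (φ t * ⟪A t, v⟫ + deriv φ t * ⟪B t, v⟫) = 0) :
    ∀ t ∈ Icc a b, deriv B t = A t := by
  have hB' : Continuous (deriv B) := hB.continuous_deriv le_rfl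
  have hBc := hB.continuous
  suffices H : ∀ t ∈ Icc a b, A t - deriv B t = 0 from fun t ht => (sub_eq_zero.1 (H t ht)).symm
  refine eq_zero_of_forall_bump hab (hA.sub hB') fun φ hφ hs v => ?_
  have hφ' : Continuous (deriv φ) := hφ.continuous_deriv (by norm_num)
  have hφc := hφ.continuous
  have hd : ∀ t, HasDerivAt (fun t => φ t * ⟪B t, v⟫)
      (deriv φ t * ⟪B t, v⟫ + φ t * ⟪deriv B t, v⟫) t := by
    intro t
    have h1 := (hφ.differentiable (by norm_num) t).hasDerivAt
    have h2 := ((hB.differentiable one_ne_zero t).hasDerivAt).inner ℝ (hasDerivAt_const t v)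
    simp only [inner_zero_right, zero_add] at h2
    exact h1.mul h2
  have hib : ∫ t in a..b, (deriv φ t * ⟪B t, v⟫ + φ t * ⟪deriv B t, v⟫) = 0 := by
    rw [intervalIntegral.integral_eq_sub_of_hasDerivAt (fun t _ => hd t)
      (Continuous.intervalIntegrable (by fun_prop) _ _)]
    simp [(eq_zero_and_deriv_eq_zero_of_notMem hs (t := a) (by simp)).1,
      (eq_zero_and_deriv_eq_zero_of_notMem hs (t := b) (by simp)).1]
  have h0 := h φ hφ hs v
  rw [← sub_eq_zero.2 (h0.trans hib.symm), ← intervalIntegral.integral_sub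
    (Continuous.intervalIntegrable (by fun_prop) _ _)
    (Continuous.intervalIntegrable (by fun_prop) _ _)]
  congr 1
  ext t
  rw [inner_sub_left]
  ring

/-! ### Trajectories, directions and the first variation -/

/-- The space in which the delayed trajectories `[q]_τ` take their values. -/
abbrev Phase (n : ℕ) := ℝ × Vec n × Vec n × Vec n × Vec n

/-- A Lagrangian as a function of a single variable. -/
def uncurryLag {n : ℕ} (M : Lag n) : Phase n → ℝ :=
  fun p => M p.1 p.2.1 p.2.2.1 p.2.2.2.1 p.2.2.2.2

/-- The delayed trajectory `[q]_τ`. -/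
def traj {n : ℕ} (τ : ℝ) (q : ℝ → Vec n) (t : ℝ) : Phase n :=
  (t, q t, deriv q t, q (t - τ), deriv q (t - τ))

/-- The direction in which `[q]_τ(t)` moves when `q` is varied along `h`. -/
def dir {n : ℕ} (τ : ℝ) (h : ℝ → Vec n) (t : ℝ) : Phase n :=
  (0, h t, deriv h t, h (t - τ), deriv h (t - τ))

/-- The first variation at `q` in the direction `h` of the functional `Jτ M`. -/
def firstVar {n : ℕ} (M : Lag n) (t₁ t₂ τ : ℝ) (q h : ℝ → Vec n) : ℝ :=
  ∫ t in t₁..t₂, fderiv ℝ (uncurryLag M) (traj τ q t) (dir τ h t)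

lemma contDiff_deriv_of_two {n : ℕ} {q : ℝ → Vec n} (hq : ContDiff ℝ 2 q) :
    ContDiff ℝ 1 (deriv q) := by
  have : ContDiff ℝ (1 + 1) q := by simpa [one_add_one_eq_two] using hq
  exact (contDiff_succ_iff_deriv.1 this).2.2

lemma contDiff_traj {n : ℕ} (τ : ℝ) {q : ℝ → Vec n} (hq : ContDiff ℝ 2 q) :
    ContDiff ℝ 1 (traj τ q) := by
  have h1 : ContDiff ℝ 1 q := hq.of_le (by norm_num)
  have h2 := contDiff_deriv_of_two hq
  have h3 : ContDiff ℝ 1 fun t : ℝ => t - τ := by fun_prop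
  exact contDiff_id.prodMk (h1.prodMk (h2.prodMk ((h1.comp h3).prodMk (h2.comp h3))))

lemma contDiff_dir {n : ℕ} (τ : ℝ) {q : ℝ → Vec n} (hq : ContDiff ℝ 2 q) :
    ContDiff ℝ 1 (dir τ q) := by
  have h1 : ContDiff ℝ 1 q := hq.of_le (by norm_num)
  have h2 := contDiff_deriv_of_two hq
  have h3 : ContDiff ℝ 1 fun t : ℝ => t - τ := by fun_prop
  exact contDiff_const.prodMk (h1.prodMk (h2.prodMk ((h1.comp h3).prodMk (h2.comp h3))))

lemma contDiff_fderiv_traj {n : ℕ} {M : Lag n} (hM : LagC2 M) (τ : ℝ) {q : ℝ → Vec n}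
    (hq : ContDiff ℝ 2 q) : ContDiff ℝ 1 fun t => fderiv ℝ (uncurryLag M) (traj τ q t) := by
  have : ContDiff ℝ 2 (uncurryLag M) := hM
  exact (this.fderiv_right (m := 1) (by norm_num)).comp (contDiff_traj τ hq)

lemma LagC2.aug {n : ℕ} {L g : Lag n} (hL : LagC2 L) (hg : LagC2 g) (lam : ℝ) :
    LagC2 (Aug L g lam) :=
  ContDiff.sub hL (contDiff_const.mul hg)

lemma firstVar_aug {n : ℕ} {L g : Lag n} (hL : LagC2 L) (hg : LagC2 g) (lam t₁ t₂ τ : ℝ)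
    {q h : ℝ → Vec n} (hq : ContDiff ℝ 2 q) (hh : ContDiff ℝ 2 h) :
    firstVar (Aug L g lam) t₁ t₂ τ q h
      = firstVar L t₁ t₂ τ q h - lam * firstVar g t₁ t₂ τ q h := by
  have hd : ∀ {M : Lag n}, LagC2 M → Differentiable ℝ (uncurryLag M) := fun hM =>
    ContDiff.differentiable (n := 2) hM (by norm_num)
  have hc : ∀ {M : Lag n}, LagC2 M →
      Continuous fun t => fderiv ℝ (uncurryLag M) (traj τ q t) (dir τ h t) := fun hM =>
    (contDiff_fderiv_traj hM τ hq).continuous.clm_apply (contDiff_dir τ hh).continuous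
  unfold firstVar
  rw [← intervalIntegral.integral_const_mul, ← intervalIntegral.integral_sub
    ((hc hL).intervalIntegrable _ _) (((hc hg).const_mul lam).intervalIntegrable _ _)]
  congr 1
  ext t
  have : HasFDerivAt (uncurryLag (Aug L g lam))
      (fderiv ℝ (uncurryLag L) (traj τ q t) - lam • fderiv ℝ (uncurryLag g) (traj τ q t))
      (traj τ q t) :=
    (hd hL _).hasFDerivAt.sub ((hd hg _).hasFDerivAt.const_smul lam)
  rw [this.fderiv]
  simp

/-! ### Partial gradients along a trajectory -/

/-- The gradient along `[q]_τ` of `M` restricted to the slot selected by `ι`. -/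
def slotGrad {n : ℕ} (M : Lag n) (τ : ℝ) (q : ℝ → Vec n) (ι : Vec n →L[ℝ] Phase n) (t : ℝ) :
    Vec n :=
  (InnerProductSpace.toDual ℝ (Vec n)).symm
    ((fderiv ℝ (uncurryLag M) (traj τ q t)).comp ι)

lemma inner_slotGrad {n : ℕ} (M : Lag n) (τ : ℝ) (q : ℝ → Vec n) (ι : Vec n →L[ℝ] Phase n)
    (t : ℝ) (w : Vec n) :
    ⟪slotGrad M τ q ι t, w⟫ = fderiv ℝ (uncurryLag M) (traj τ q t) (ι w) := by
  simp [slotGrad]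

lemma contDiff_slotGrad {n : ℕ} {M : Lag n} (hM : LagC2 M) (τ : ℝ) {q : ℝ → Vec n}
    (hq : ContDiff ℝ 2 q) (ι : Vec n →L[ℝ] Phase n) : ContDiff ℝ 1 (slotGrad M τ q ι) :=
  (InnerProductSpace.toDual ℝ (Vec n)).symm.contDiff.comp
    ((contDiff_fderiv_traj hM τ hq).clm_comp contDiff_const)

lemma gradient_eq_slotGrad {n : ℕ} {M : Lag n} (hM : LagC2 M) (τ : ℝ) (q : ℝ → Vec n)
    (ι : Vec n →L[ℝ] Phase n) (t : ℝ) (f : Vec n → Phase n) (y : Vec n)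
    (hf : HasFDerivAt f ι y) (hy : f y = traj τ q t) :
    gradient (fun z => uncurryLag M (f z)) y = slotGrad M τ q ι t := by
  have hd : Differentiable ℝ (uncurryLag M) := ContDiff.differentiable (n := 2) hM (by norm_num)
  have := (hd (f y)).hasFDerivAt.comp y hf
  rw [hy] at this
  exact (hasFDerivAt_iff_hasGradientAt.1 this).gradient

/-- The inclusion of the `q`-slot. -/
def ι₂ (n : ℕ) : Vec n →L[ℝ] Phase n :=
  (0 : Vec n →L[ℝ] ℝ).prod ((ContinuousLinearMap.id ℝ _).prod
    ((0 : Vec n →L[ℝ] Vec n).prod ((0 : Vec n →L[ℝ] Vec n).prod 0)))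

/-- The inclusion of the `q̇`-slot. -/
def ι₃ (n : ℕ) : Vec n →L[ℝ] Phase n :=
  (0 : Vec n →L[ℝ] ℝ).prod ((0 : Vec n →L[ℝ] Vec n).prod
    ((ContinuousLinearMap.id ℝ _).prod ((0 : Vec n →L[ℝ] Vec n).prod 0)))

/-- The inclusion of the slot of the delayed position. -/
def ι₄ (n : ℕ) : Vec n →L[ℝ] Phase n :=
  (0 : Vec n →L[ℝ] ℝ).prod ((0 : Vec n →L[ℝ] Vec n).prod
    ((0 : Vec n →L[ℝ] Vec n).prod ((ContinuousLinearMap.id ℝ _).prod 0)))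

/-- The inclusion of the slot of the delayed velocity. -/
def ι₅ (n : ℕ) : Vec n →L[ℝ] Phase n :=
  (0 : Vec n →L[ℝ] ℝ).prod ((0 : Vec n →L[ℝ] Vec n).prod
    ((0 : Vec n →L[ℝ] Vec n).prod ((0 : Vec n →L[ℝ] Vec n).prod (ContinuousLinearMap.id ℝ _))))

section

variable {n : ℕ} {M : Lag n} (τ : ℝ) (q : ℝ → Vec n)

lemma dL2_eq (hM : LagC2 M) : dL2 M τ q = slotGrad M τ q (ι₂ n) := funext fun t =>
  gradient_eq_slotGrad hM τ q (ι₂ n) t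
    (fun y => (t, y, deriv q t, q (t - τ), deriv q (t - τ))) _
    ((hasFDerivAt_const _ _).prodMk ((hasFDerivAt_id _).prodMk ((hasFDerivAt_const _ _).prodMk
      ((hasFDerivAt_const _ _).prodMk (hasFDerivAt_const _ _))))) rfl

lemma dL3_eq (hM : LagC2 M) : dL3 M τ q = slotGrad M τ q (ι₃ n) := funext fun t =>
  gradient_eq_slotGrad hM τ q (ι₃ n) t
    (fun v => (t, q t, v, q (t - τ), deriv q (t - τ))) _
    ((hasFDerivAt_const _ _).prodMk ((hasFDerivAt_const _ _).prodMk ((hasFDerivAt_id _).prodMk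
      ((hasFDerivAt_const _ _).prodMk (hasFDerivAt_const _ _))))) rfl

lemma dL4_eq (hM : LagC2 M) : dL4 M τ q = slotGrad M τ q (ι₄ n) := funext fun t =>
  gradient_eq_slotGrad hM τ q (ι₄ n) t
    (fun y => (t, q t, deriv q t, y, deriv q (t - τ))) _
    ((hasFDerivAt_const _ _).prodMk ((hasFDerivAt_const _ _).prodMk ((hasFDerivAt_const _ _).prodMk
      ((hasFDerivAt_id _).prodMk (hasFDerivAt_const _ _))))) rfl

lemma dL5_eq (hM : LagC2 M) : dL5 M τ q = slotGrad M τ q (ι₅ n) := funext fun t =>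
  gradient_eq_slotGrad hM τ q (ι₅ n) t
    (fun v => (t, q t, deriv q t, q (t - τ), v)) _
    ((hasFDerivAt_const _ _).prodMk ((hasFDerivAt_const _ _).prodMk ((hasFDerivAt_const _ _).prodMk
      ((hasFDerivAt_const _ _).prodMk (hasFDerivAt_id _))))) rfl

end

/-! ### From a vanishing first variation to the Euler–Lagrange equations -/

/-- For the variation `φ • v` the delayed terms are moved back to the undelayed time by the
substitution `t ↦ t + τ`; this uses that `φ` vanishes on `[t₁ - τ, t₁]`. -/
lemma firstVar_bump {n : ℕ} {M : Lag n} (hM : LagC2 M) {t₁ t₂ τ : ℝ} (hτ : 0 < τ)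
    {q : ℝ → Vec n} (hq : ContDiff ℝ 2 q) {φ : ℝ → ℝ} (hφ : ContDiff ℝ 2 φ)
    (hs : tsupport φ ⊆ Ioo t₁ t₂) (v : Vec n) :
    firstVar M t₁ t₂ τ q (fun t => φ t • v)
      = (∫ t in t₁..t₂, (φ t * ⟪dL2 M τ q t, v⟫ + deriv φ t * ⟪dL3 M τ q t, v⟫))
        + ∫ t in t₁..(t₂ - τ),
          (φ t * ⟪dL4 M τ q (t + τ), v⟫ + deriv φ t * ⟪dL5 M τ q (t + τ), v⟫) := by
  rw [dL2_eq τ q hM, dL3_eq τ q hM, dL4_eq τ q hM, dL5_eq τ q hM]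
  have hφc := hφ.continuous
  have hφ' : Continuous (deriv φ) := hφ.continuous_deriv (by norm_num)
  have hc : ∀ ι, Continuous (slotGrad M τ q ι) := fun ι => (contDiff_slotGrad hM τ hq ι).continuous
  have c2 := hc (ι₂ n)
  have c3 := hc (ι₃ n)
  have c4 := hc (ι₄ n)
  have c5 := hc (ι₅ n)
  have hderiv : deriv (fun t => φ t • v) = fun t => deriv φ t • v := by
    ext1 t
    exact deriv_smul_const (hφ.differentiable (by norm_num) t) v
  set G : ℝ → ℝ := fun t => φ t * ⟪slotGrad M τ q (ι₄ n) (t + τ), v⟫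
    + deriv φ t * ⟪slotGrad M τ q (ι₅ n) (t + τ), v⟫ with hG
  have hGc : Continuous G := by fun_prop
  have hshift : ∫ t in t₁..(t₂ - τ), G t = ∫ t in t₁..t₂, G (t - τ) := by
    rw [intervalIntegral.integral_comp_sub_right,
      ← intervalIntegral.integral_add_adjacent_intervals (b := t₁)
        (hGc.intervalIntegrable (t₁ - τ) t₁) (hGc.intervalIntegrable _ _)]
    have : ∫ t in (t₁ - τ)..t₁, G t = 0 := by
      rw [intervalIntegral.integral_congr (g := fun _ => 0), intervalIntegral.integral_zero]
      intro t ht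
      rw [uIcc_of_le (by linarith)] at ht
      obtain ⟨h1, h2⟩ := eq_zero_and_deriv_eq_zero_of_notMem hs (t := t)
        (fun h => absurd h.1 (not_lt.2 ht.2))
      simp [hG, h1, h2]
    rw [this, zero_add]
  rw [hshift, ← intervalIntegral.integral_add (Continuous.intervalIntegrable (by fun_prop) _ _)
    (Continuous.intervalIntegrable (by fun_prop) _ _)]
  unfold firstVar
  congr 1
  ext t
  have hsplit : dir τ (fun t => φ t • v) t = φ t • ι₂ n v + deriv φ t • ι₃ n v
      + (φ (t - τ) • ι₄ n v + deriv φ (t - τ) • ι₅ n v) := by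
    simp [dir, hderiv, ι₂, ι₃, ι₄, ι₅]
  rw [hsplit]
  simp only [hG, map_add, map_smul, inner_slotGrad, smul_eq_mul, sub_add_cancel]

lemma integral_eq_zero_of_le {K φ : ℝ → ℝ} {a b c d : ℝ} (hs : tsupport φ ⊆ Ioo a b)
    (hK : ∀ t, φ t = 0 → deriv φ t = 0 → K t = 0) (hcd : c ≤ d) (h : d ≤ a ∨ b ≤ c) :
    ∫ t in c..d, K t = 0 := by
  rw [intervalIntegral.integral_congr (g := fun _ => 0), intervalIntegral.integral_zero]
  intro t ht
  rw [uIcc_of_le hcd] at ht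
  obtain ⟨h1, h2⟩ := eq_zero_and_deriv_eq_zero_of_notMem hs (t := t) (by
    rintro ⟨h3, h4⟩
    rcases h with h | h
    · linarith [ht.2]
    · linarith [ht.1])
  exact hK t h1 h2

/-- If the first variation vanishes in all admissible directions, then the delayed
Euler–Lagrange equations hold: directions supported in `(t₁, t₂ - τ)` give the first one and
directions supported in `(t₂ - τ, t₂)` the second one, as the latter do not see the delay. -/
lemma elDelay_of_firstVar_eq_zero {n : ℕ} {M : Lag n} (hM : LagC2 M) {t₁ t₂ τ : ℝ} (hτ : 0 < τ)
    (hτ' : τ < t₂ - t₁) {q : ℝ → Vec n} (hq : ContDiff ℝ 2 q)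
    (h : ∀ η : ℝ → Vec n, ContDiff ℝ 2 η → (∀ t ≤ t₁, η t = 0) → η t₂ = 0 →
      firstVar M t₁ t₂ τ q η = 0) :
    ELdelay M t₁ t₂ τ q := by
  have hc : ∀ ι, ContDiff ℝ 1 (slotGrad M τ q ι) := fun ι => contDiff_slotGrad hM τ hq ι
  have c2 : ContDiff ℝ 1 (dL2 M τ q) := dL2_eq τ q hM ▸ hc _
  have c3 : ContDiff ℝ 1 (dL3 M τ q) := dL3_eq τ q hM ▸ hc _
  have c4 : ContDiff ℝ 1 (dL4 M τ q) := dL4_eq τ q hM ▸ hc _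
  have c5 : ContDiff ℝ 1 (dL5 M τ q) := dL5_eq τ q hM ▸ hc _
  have k2 := c2.continuous
  have k3 := c3.continuous
  have k4 := c4.continuous
  have k5 := c5.continuous
  have hbump : ∀ φ : ℝ → ℝ, ContDiff ℝ 2 φ → tsupport φ ⊆ Ioo t₁ t₂ → ∀ v : Vec n,
      (∫ t in t₁..t₂, (φ t * ⟪dL2 M τ q t, v⟫ + deriv φ t * ⟪dL3 M τ q t, v⟫))
        + ∫ t in t₁..(t₂ - τ),
          (φ t * ⟪dL4 M τ q (t + τ), v⟫ + deriv φ t * ⟪dL5 M τ q (t + τ), v⟫) = 0 := by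
    intro φ hφ hs v
    rw [← firstVar_bump hM hτ hq hφ hs v]
    refine h _ (hφ.smul contDiff_const) (fun t ht => ?_) ?_
    · rw [(eq_zero_and_deriv_eq_zero_of_notMem hs
        (fun h => absurd h.1 (not_lt.2 ht))).1, zero_smul]
    · rw [(eq_zero_and_deriv_eq_zero_of_notMem hs (by simp)).1, zero_smul]
  constructor
  · refine deriv_eq_of_forall_bump (A := fun t => dL2 M τ q t + dL4 M τ q (t + τ))
      (B := fun t => dL3 M τ q t + dL5 M τ q (t + τ)) (by linarith) (by fun_prop)
      (c3.add (c5.comp (contDiff_id.add contDiff_const))) fun φ hφ hs v => ?_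
    have hφc := hφ.continuous
    have hφ' : Continuous (deriv φ) := hφ.continuous_deriv (by norm_num)
    have h0 := hbump φ hφ (hs.trans (Ioo_subset_Ioo le_rfl (by linarith))) v
    rw [← intervalIntegral.integral_add_adjacent_intervals (a := t₁) (b := t₂ - τ) (c := t₂)
      (Continuous.intervalIntegrable (by fun_prop) _ _)
      (Continuous.intervalIntegrable (by fun_prop) _ _),
      integral_eq_zero_of_le (c := t₂ - τ) (d := t₂) hs (fun t h1 h2 => by simp [h1, h2])
        (by linarith) (Or.inr le_rfl), add_zero, ← intervalIntegral.integral_add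
      (Continuous.intervalIntegrable (by fun_prop) _ _)
      (Continuous.intervalIntegrable (by fun_prop) _ _)] at h0
    rw [← h0]
    congr 1
    ext t
    rw [inner_add_left, inner_add_left]
    ring
  · refine deriv_eq_of_forall_bump (by linarith) k2 c3 fun φ hφ hs v => ?_
    have hφc := hφ.continuous
    have hφ' : Continuous (deriv φ) := hφ.continuous_deriv (by norm_num)
    have h0 := hbump φ hφ (hs.trans (Ioo_subset_Ioo (by linarith) le_rfl)) v
    rwa [← intervalIntegral.integral_add_adjacent_intervals (a := t₁) (b := t₂ - τ) (c := t₂)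
      (Continuous.intervalIntegrable (by fun_prop) _ _)
      (Continuous.intervalIntegrable (by fun_prop) _ _),
      integral_eq_zero_of_le (c := t₁) (d := t₂ - τ) hs (fun t h1 h2 => by simp [h1, h2])
        (by linarith) (Or.inl le_rfl),
      integral_eq_zero_of_le (c := t₁) (d := t₂ - τ) hs (fun t h1 h2 => by simp [h1, h2])
        (by linarith) (Or.inl le_rfl), add_zero, zero_add] at h0

/-! ### Two-parameter variations and the multiplier rule -/

/-- The variation of `q` along `h` and `k` with parameters `x = (x₁, x₂)`. -/
def vary {n : ℕ} (q h k : ℝ → Vec n) (x : ℝ × ℝ) (t : ℝ) : Vec n :=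
  q t + (x.1 • h t + x.2 • k t)

lemma traj_vary {n : ℕ} (τ : ℝ) {q h k : ℝ → Vec n} (hq : ContDiff ℝ 2 q) (hh : ContDiff ℝ 2 h)
    (hk : ContDiff ℝ 2 k) (x : ℝ × ℝ) (t : ℝ) :
    traj τ (vary q h k x) t = traj τ q t + (x.1 • dir τ h t + x.2 • dir τ k t) := by
  have hd : deriv (vary q h k x) = fun t => deriv q t + (x.1 • deriv h t + x.2 • deriv k t) := by
    ext1 t
    have d : ∀ {f : ℝ → Vec n}, ContDiff ℝ 2 f → HasDerivAt f (deriv f t) t := fun hf =>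
      (hf.differentiable (by norm_num) t).hasDerivAt
    exact ((d hq).add (((d hh).const_smul x.1).add ((d hk).const_smul x.2))).deriv
  simp [traj, dir, hd, vary]

lemma hasStrictFDerivAt_vary {n : ℕ} {M : Lag n} (hM : LagC2 M) (t₁ t₂ τ : ℝ)
    {q h k : ℝ → Vec n} (hq : ContDiff ℝ 2 q) (hh : ContDiff ℝ 2 h) (hk : ContDiff ℝ 2 k) :
    ∃ D : StrongDual ℝ (ℝ × ℝ),
      HasStrictFDerivAt (fun x => Jτ M t₁ t₂ τ (vary q h k x)) D 0 ∧
      D (1, 0) = firstVar M t₁ t₂ τ q h ∧ D (0, 1) = firstVar M t₁ t₂ τ q k := by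
  have hM2 : ContDiff ℝ 2 (uncurryLag M) := hM
  set P : (ℝ × ℝ) × ℝ → Phase n := fun y =>
    traj τ q y.2 + (y.1.1 • dir τ h y.2 + y.1.2 • dir τ k y.2) with hPdef
  have hP : ContDiff ℝ 1 P := by
    have h1 := contDiff_traj τ hq
    have h2 := contDiff_dir τ hh
    have h3 := contDiff_dir τ hk
    fun_prop
  have hF : ContDiff ℝ 1 fun y => uncurryLag M (P y) := (hM2.of_le (by norm_num)).comp hP
  have hmain := hasStrictFDerivAt_parametric_integral _ hF t₁ t₂ (0 : ℝ × ℝ)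
  have hcont : Continuous fun t : ℝ => (fderiv ℝ (fun y => uncurryLag M (P y)) (0, t)).comp
      (ContinuousLinearMap.inl ℝ (ℝ × ℝ) ℝ) :=
    ((hF.continuous_fderiv one_ne_zero).comp (by fun_prop : Continuous fun t : ℝ =>
      ((0 : ℝ × ℝ), t))).clm_comp continuous_const
  have hpart : ∀ t : ℝ, (fderiv ℝ (fun y => uncurryLag M (P y)) (0, t)).comp
      (ContinuousLinearMap.inl ℝ (ℝ × ℝ) ℝ) = (fderiv ℝ (uncurryLag M) (traj τ q t)).comp
        ((ContinuousLinearMap.fst ℝ ℝ ℝ).smulRight (dir τ h t)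
          + (ContinuousLinearMap.snd ℝ ℝ ℝ).smulRight (dir τ k t)) := by
    intro t
    have e1 := HasFDerivAt.comp (f := fun x : ℝ × ℝ => (x, t)) (0 : ℝ × ℝ)
      ((hF.differentiable one_ne_zero) ((0 : ℝ × ℝ), t)).hasFDerivAt
      (hasFDerivAt_prodMk_left (0 : ℝ × ℝ) t)
    have e2 : HasFDerivAt (fun x : ℝ × ℝ => P (x, t))
        ((ContinuousLinearMap.fst ℝ ℝ ℝ).smulRight (dir τ h t)
          + (ContinuousLinearMap.snd ℝ ℝ ℝ).smulRight (dir τ k t)) 0 :=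
      (((hasFDerivAt_fst (𝕜 := ℝ) (p := (0 : ℝ × ℝ))).smul_const (dir τ h t)).add
        ((hasFDerivAt_snd (𝕜 := ℝ) (p := (0 : ℝ × ℝ))).smul_const (dir τ k t))).const_add
          (traj τ q t)
    have e3 : P ((0 : ℝ × ℝ), t) = traj τ q t := by simp [hPdef]
    have e4 := ((hM2.differentiable (by norm_num)) (P ((0 : ℝ × ℝ), t))).hasFDerivAt.comp
      (0 : ℝ × ℝ) e2
    rw [e3] at e4
    exact e1.unique e4
  refine ⟨_, hmain.congr_of_eventuallyEq (Filter.Eventually.of_forall fun x => ?_), ?_, ?_⟩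
  · refine intervalIntegral.integral_congr fun t _ => ?_
    exact congrArg (uncurryLag M) (traj_vary τ hq hh hk x t).symm
  · rw [ContinuousLinearMap.intervalIntegral_apply (hcont.intervalIntegrable _ _)]
    simp only [hpart]
    simp [firstVar]
  · rw [ContinuousLinearMap.intervalIntegral_apply (hcont.intervalIntegrable _ _)]
    simp only [hpart]
    simp [firstVar]

lemma admissible_vary {n : ℕ} {t₁ t₂ τ : ℝ} {δ : ℝ → Vec n} {qt2 : Vec n} {q h k : ℝ → Vec n}
    (hq : Admissible t₁ t₂ τ δ qt2 q) (hh : ContDiff ℝ 2 h) (hk : ContDiff ℝ 2 k)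
    (hh1 : ∀ t ≤ t₁, h t = 0) (hh2 : h t₂ = 0) (hk1 : ∀ t ≤ t₁, k t = 0) (hk2 : k t₂ = 0)
    (x : ℝ × ℝ) : Admissible t₁ t₂ τ δ qt2 (vary q h k x) := by
  refine ⟨hq.1.add ((hh.const_smul x.1).add (hk.const_smul x.2)), fun t ht => ?_, ?_⟩
  · simp [vary, hh1 t ht.2, hk1 t ht.2, hq.2.1 t ht]
  · simp [vary, hh2, hk2, hq.2.2]

lemma eventually_vary_close {n : ℕ} {q h k : ℝ → Vec n} (hh : Continuous h) (hk : Continuous k)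
    (a b : ℝ) {ε : ℝ} (hε : 0 < ε) :
    ∀ᶠ x : ℝ × ℝ in nhds 0, ∀ t ∈ Icc a b, ‖vary q h k x t - q t‖ < ε := by
  obtain ⟨C, hC⟩ := (isCompact_Icc (a := a) (b := b)).exists_bound_of_continuousOn
    hh.continuousOn
  obtain ⟨C₂, hC₂⟩ := (isCompact_Icc (a := a) (b := b)).exists_bound_of_continuousOn
    hk.continuousOn
  have hlim : Filter.Tendsto (fun x : ℝ × ℝ => |x.1| * C + |x.2| * C₂) (nhds 0) (nhds 0) := by
    have : Continuous fun x : ℝ × ℝ => |x.1| * C + |x.2| * C₂ := by fun_prop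
    simpa using this.tendsto 0
  filter_upwards [hlim.eventually_lt_const hε] with x hx t ht
  have : vary q h k x t - q t = x.1 • h t + x.2 • k t := by simp [vary]
  rw [this]
  refine lt_of_le_of_lt (norm_add_le _ _) (lt_of_le_of_lt ?_ hx)
  rw [norm_smul, norm_smul, Real.norm_eq_abs, Real.norm_eq_abs]
  gcongr
  · exact hC t ht
  · exact hC₂ t ht

/-- the isoperimetric Euler–Lagrange equations with time delay for a
normal extremizer of the isoperimetric problem with time delay. -/
theorem isoperimetric_euler_lagrange_with_time_delay
    {n : ℕ} (hn : 0 < n) (t₁ t₂ τ l : ℝ) (ht : t₁ < t₂) (hτ : 0 < τ)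
    (hτ' : τ < t₂ - t₁) (L g : Lag n) (hL : LagC2 L) (hg : LagC2 g)
    (δ : ℝ → Vec n) (qt2 : Vec n) (q : ℝ → Vec n)
    (hq : Admissible t₁ t₂ τ δ qt2 q)
    (hconstr : Jτ g t₁ t₂ τ q = l)
    -- `q` is a local minimizer or local maximizer of `J^τ` among admissible
    -- functions satisfying the isoperimetric constraint:
    (hext : ∃ ε > (0 : ℝ),
      (∀ q' : ℝ → Vec n, Admissible t₁ t₂ τ δ qt2 q' → Jτ g t₁ t₂ τ q' = l →
        (∀ t ∈ Icc (t₁ - τ) t₂, ‖q' t - q t‖ < ε) →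
        Jτ L t₁ t₂ τ q ≤ Jτ L t₁ t₂ τ q') ∨
      (∀ q' : ℝ → Vec n, Admissible t₁ t₂ τ δ qt2 q' → Jτ g t₁ t₂ τ q' = l →
        (∀ t ∈ Icc (t₁ - τ) t₂, ‖q' t - q t‖ < ε) →
        Jτ L t₁ t₂ τ q' ≤ Jτ L t₁ t₂ τ q))
    -- normality: `q` does not satisfy the Euler–Lagrange equations associated
    -- with the constraint Lagrangian `g`:
    (hnormal : ¬ ELdelay g t₁ t₂ τ q) :
    ∃ lam : ℝ, ELdelay (Aug L g lam) t₁ t₂ τ q := by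
  obtain ⟨ε, hε, hext⟩ := hext
  obtain ⟨k, hk, hk1, hk2, hk0⟩ : ∃ k : ℝ → Vec n, ContDiff ℝ 2 k ∧ (∀ t ≤ t₁, k t = 0) ∧
      k t₂ = 0 ∧ firstVar g t₁ t₂ τ q k ≠ 0 := by
    by_contra! hcon
    exact hnormal (elDelay_of_firstVar_eq_zero hg hτ hτ' hq.1 hcon)
  refine ⟨firstVar L t₁ t₂ τ q k / firstVar g t₁ t₂ τ q k,
    elDelay_of_firstVar_eq_zero (hL.aug hg _) hτ hτ' hq.1 fun h hh hh1 hh2 => ?_⟩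
  rw [firstVar_aug hL hg _ _ _ _ hq.1 hh]
  obtain ⟨DL, hDL, hDLh, hDLk⟩ := hasStrictFDerivAt_vary hL t₁ t₂ τ hq.1 hh hk
  obtain ⟨Dg, hDg, hDgh, hDgk⟩ := hasStrictFDerivAt_vary hg t₁ t₂ τ hq.1 hh hk
  have hv0 : vary q h k 0 = q := by
    ext1 t
    simp [vary]
  have hclose := eventually_vary_close (q := q) hh.continuous hk.continuous (t₁ - τ) t₂ hε
  have hadm := admissible_vary hq hh hk hh1 hh2 hk1 hk2
  have hextr : IsLocalExtrOn (fun x => Jτ L t₁ t₂ τ (vary q h k x))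
      {x | Jτ g t₁ t₂ τ (vary q h k x) = Jτ g t₁ t₂ τ (vary q h k 0)} 0 := by
    rcases hext with hmin | hmax
    · left
      filter_upwards [nhdsWithin_le_nhds hclose, self_mem_nhdsWithin] with x hx hxg
      simp only [hv0, hconstr] at hxg ⊢
      exact hmin _ (hadm x) hxg hx
    · right
      filter_upwards [nhdsWithin_le_nhds hclose, self_mem_nhdsWithin] with x hx hxg
      simp only [hv0, hconstr] at hxg ⊢
      exact hmax _ (hadm x) hxg hx
  obtain ⟨a, b, hab, hsum⟩ := hextr.exists_multipliers_of_hasStrictFDerivAt_1d hDg hDL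
  have e1 : a * firstVar g t₁ t₂ τ q h + b * firstVar L t₁ t₂ τ q h = 0 := by
    simpa [hDLh, hDgh] using DFunLike.congr_fun hsum ((1, 0) : ℝ × ℝ)
  have e2 : a * firstVar g t₁ t₂ τ q k + b * firstVar L t₁ t₂ τ q k = 0 := by
    simpa [hDLk, hDgk] using DFunLike.congr_fun hsum ((0, 1) : ℝ × ℝ)
  have hb : b ≠ 0 := by
    rintro rfl
    have : a = 0 := by simpa [hk0] using e2
    exact hab (by simp [this])
  field_simp
  refine mul_left_cancel₀ hb ?_
  linear_combination firstVar g t₁ t₂ τ q k * e1 - firstVar g t₁ t₂ τ q h * e2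

end
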